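/- Polynomial loops are dense in the continuous loop group of SU(2): the set of continuous maps f : S¹ → SU(2) such that each matrix entry of f is the restriction to S¹ of a Laurent polynomial (i.e., for each i, j there is a finitely supported a : ℤ → ℂ with (f(z))_{ij} = Σ_k a_k z^k for all z ∈ S¹) is dense in the space C(S¹, SU(2)) of continuous maps with the topology of uniform convergence. -/

import Mathlib

/-!
Work in the Banach algebra of continuous `2 × 2` matrix functions on the circle, and let `K` be
the closure of the monoid of polynomial loops. By the Lie product formula the generators of
one-parameter groups in `K` form a closed real subspace. For a Laurent polynomial `u` of modulus
one, the loop with first row `(0, u)` squares to `-1`, so its exponential is polynomial in `u`;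
since real combinations of such `u` are dense, `K` contains the exponential of every loop with
first row `(0, w)` and second row `(-conj w, 0)`. Every loop in `SU(2)` whose first row has
nowhere vanishing entries is a product of two such exponentials. Nowhere vanishing functions are
dense on the circle because a `C¹` curve in the plane has dense complement, and renormalizing the
first row shows that every loop lies in `K`.
-/

open Filter NormedSpace Topology
open scoped ComplexConjugate

section ExponentialFormula

theorem norm_pow_succ_sub_pow_succ_le {A : Type*} [SeminormedRing A] {a b : A} {M : ℝ}
    (ha : ‖a‖ ≤ M) (hb : ‖b‖ ≤ M) (n : ℕ) :
    ‖a ^ (n + 1) - b ^ (n + 1)‖ ≤ (n + 1) * M ^ n * ‖a - b‖ := by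
  induction n with
  | zero => simp
  | succ n ih =>
    have hpow : ‖a ^ (n + 1)‖ ≤ M ^ (n + 1) :=
      (norm_pow_le' a n.succ_pos).trans (pow_le_pow_left₀ (norm_nonneg a) ha _)
    calc ‖a ^ (n + 1 + 1) - b ^ (n + 1 + 1)‖
        = ‖a ^ (n + 1) * (a - b) + (a ^ (n + 1) - b ^ (n + 1)) * b‖ := by
          rw [pow_succ a (n + 1), pow_succ b (n + 1)]; congr 1; noncomm_ring
      _ ≤ M ^ (n + 1) * ‖a - b‖ + (n + 1) * M ^ n * ‖a - b‖ * M :=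
          norm_add_le_of_le (norm_mul_le_of_le hpow le_rfl) (norm_mul_le_of_le ih hb)
      _ = ((n + 1 : ℕ) + 1) * M ^ (n + 1) * ‖a - b‖ := by push_cast; ring

theorem norm_pow_succ_sub_pow_succ_le_exp {A : Type*} [SeminormedRing A] {a b : A} {C : ℝ}
    (hC : 0 ≤ C) (n : ℕ) (ha : ‖a‖ ≤ Real.exp (C * (n + 1 : ℝ)⁻¹))
    (hb : ‖b‖ ≤ Real.exp (C * (n + 1 : ℝ)⁻¹)) :
    ‖a ^ (n + 1) - b ^ (n + 1)‖ ≤ Real.exp C * ((n + 1) * ‖a - b‖) := by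
  have hexp : Real.exp (C * (n + 1 : ℝ)⁻¹) ^ n ≤ Real.exp C := by
    rw [← Real.exp_nat_mul, Real.exp_le_exp, mul_left_comm, ← div_eq_mul_inv]
    exact mul_le_of_le_one_right hC (div_le_one_of_le₀ (by linarith) (by positivity))
  calc ‖a ^ (n + 1) - b ^ (n + 1)‖
      ≤ (n + 1) * Real.exp (C * (n + 1 : ℝ)⁻¹) ^ n * ‖a - b‖ :=
        norm_pow_succ_sub_pow_succ_le ha hb n
    _ ≤ (n + 1) * Real.exp C * ‖a - b‖ := by gcongr
    _ = Real.exp C * ((n + 1) * ‖a - b‖) := by ring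

theorem eventually_norm_le_exp_of_hasDerivAt {A : Type*} [NormedRing A] [NormOneClass A]
    [NormedAlgebra ℝ A] {F : ℝ → A} {x : A} (h0 : F 0 = 1) (hF : HasDerivAt F x 0) :
    ∃ C, 0 ≤ C ∧ ∀ᶠ t in 𝓝 0, ‖F t‖ ≤ Real.exp (C * |t|) := by
  obtain ⟨C, hC, hbound⟩ := hF.isBigO_sub.exists_nonneg
  refine ⟨C, hC, hbound.bound.mono fun t ht => ?_⟩
  rw [h0, sub_zero, Real.norm_eq_abs] at ht
  calc ‖F t‖ ≤ ‖F t - 1‖ + ‖(1 : A)‖ := norm_le_norm_sub_add (F t) 1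
    _ ≤ C * |t| + 1 := by rw [norm_one]; gcongr
    _ ≤ Real.exp (C * |t|) := Real.add_one_le_exp _

variable {A : Type*} [NormedRing A] [NormedAlgebra ℝ A]

theorem exp_smul_of_mul_self_eq_neg_one {x : A} (hx : x * x = -1) (t : ℝ) :
    exp (t • x) = Real.cos t • (1 : A) + Real.sin t • x := by
  let _ : NormedAlgebra ℚ A := .restrictScalars ℚ ℝ A
  have hcont : Continuous (Complex.lift ⟨x, hx⟩) :=
    LinearMap.continuous_of_finiteDimensional (Complex.lift ⟨x, hx⟩).toLinearMap
  have h := map_exp (Complex.lift ⟨x, hx⟩) hcont (t * Complex.I)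
  rw [← Complex.exp_eq_exp_ℂ, Complex.exp_mul_I, ← Complex.ofReal_cos, ← Complex.ofReal_sin] at h
  simpa [-Complex.ofReal_cos, -Complex.ofReal_sin, Algebra.algebraMap_eq_smul_one] using h.symm

variable [CompleteSpace A]

theorem hasDerivAt_exp_smul_zero (x : A) : HasDerivAt (fun t : ℝ => exp (t • x)) x 0 := by
  simpa using hasDerivAt_exp_smul_const (𝕂 := ℝ) x 0

theorem exp_inv_smul_pow (x : A) (n : ℕ) : exp ((n + 1 : ℝ)⁻¹ • x) ^ (n + 1) = exp x := by
  let _ : NormedAlgebra ℚ A := .restrictScalars ℚ ℝ A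
  rw [← exp_nsmul, ← Nat.cast_smul_eq_nsmul ℝ, Nat.cast_succ,
    smul_inv_smul₀ (Nat.cast_add_one_ne_zero n)]

theorem exp_continuousMap_apply {X : Type*} [TopologicalSpace X] [CompactSpace X] (f : C(X, A))
    (x : X) : exp f x = exp (f x) := by
  let _ : NormedAlgebra ℚ A := .restrictScalars ℚ ℝ A
  let _ : NormedAlgebra ℚ C(X, A) := .restrictScalars ℚ ℝ C(X, A)
  exact map_exp ((Pi.evalRingHom (fun _ : X => A) x).comp ContinuousMap.coeFnRingHom)
    (continuous_eval_const x) f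

/-- Both `F` and `t ↦ exp (t • x)` are tangent to `1 + t • x` at `0`, so their values at
`1 / (n + 1)` differ by `o(1 / n)`, and taking `(n + 1)`-st powers costs only a factor `n`. -/
theorem tendsto_pow_exp_of_hasDerivAt [NormOneClass A] {F : ℝ → A} {x : A} (h0 : F 0 = 1)
    (hF : HasDerivAt F x 0) :
    Tendsto (fun n : ℕ => F (n + 1 : ℝ)⁻¹ ^ (n + 1)) atTop (𝓝 (exp x)) := by
  let E : ℝ → A := fun t => exp (t • x)
  have hE0 : E 0 = 1 := by simp [E]
  have hE : HasDerivAt E x 0 := hasDerivAt_exp_smul_zero x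
  obtain ⟨C, hC, hFC⟩ := eventually_norm_le_exp_of_hasDerivAt h0 hF
  obtain ⟨D, -, hED⟩ := eventually_norm_le_exp_of_hasDerivAt hE0 hE
  have hlim : Tendsto (fun n : ℕ => (n + 1 : ℝ)⁻¹) atTop (𝓝[>] 0) :=
    tendsto_inv_atTop_nhdsGT_zero.comp
      (tendsto_atTop_add_const_right _ _ tendsto_natCast_atTop_atTop)
  have hlim0 := hlim.mono_right nhdsWithin_le_nhds
  have hslope : Tendsto
      (fun n : ℕ => Real.exp (max C D) * ‖(n + 1 : ℝ) • (F (n + 1 : ℝ)⁻¹ - E (n + 1 : ℝ)⁻¹)‖)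
      atTop (𝓝 0) := by
    simpa [Function.comp_def, h0, hE0] using
      ((hF.sub hE).tendsto_slope_zero_right.comp hlim).norm.const_mul (Real.exp (max C D))
  have hle {B : ℝ} (hB : B ≤ max C D) (n : ℕ) :
      Real.exp (B * |(n + 1 : ℝ)⁻¹|) ≤ Real.exp (max C D * (n + 1 : ℝ)⁻¹) := by
    rw [abs_of_nonneg (by positivity)]; gcongr
  rw [tendsto_iff_norm_sub_tendsto_zero]
  refine squeeze_zero' (.of_forall fun _ => norm_nonneg _) ?_ hslope
  filter_upwards [hlim0.eventually hFC, hlim0.eventually hED] with n hFn hEn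
  rw [← exp_inv_smul_pow x n, norm_smul, Real.norm_of_nonneg (by positivity)]
  exact norm_pow_succ_sub_pow_succ_le_exp (hC.trans (le_max_left ..)) n
    (hFn.trans (hle (le_max_left ..) n)) (hEn.trans (hle (le_max_right ..) n))

theorem exp_add_mem_of_isClosed [NormOneClass A] {K : Submonoid A} (hK : IsClosed (K : Set A))
    {x y : A} (hx : ∀ t : ℝ, exp (t • x) ∈ K) (hy : ∀ t : ℝ, exp (t • y) ∈ K) :
    exp (x + y) ∈ K := by
  have hderiv : HasDerivAt (fun t : ℝ => exp (t • x) * exp (t • y)) (x + y) 0 := by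
    simpa using! (hasDerivAt_exp_smul_zero x).mul (hasDerivAt_exp_smul_zero y)
  exact hK.mem_of_tendsto (tendsto_pow_exp_of_hasDerivAt (by simp) hderiv)
    (.of_forall fun n => pow_mem (mul_mem (hx _) (hy _)) _)

/-- The Lie algebra of a closed submonoid `K` of a Banach algebra: the generators of the
one-parameter groups contained in `K`. -/
def lieAlgebraOfClosed [NormOneClass A] (K : Submonoid A) (hK : IsClosed (K : Set A)) :
    Submodule ℝ A where
  carrier := {x | ∀ t : ℝ, exp (t • x) ∈ K}
  zero_mem' t := by simp [one_mem]
  add_mem' {x y} hx hy t := by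
    rw [smul_add]
    exact exp_add_mem_of_isClosed hK (fun s => by rw [smul_smul]; exact hx _)
      (fun s => by rw [smul_smul]; exact hy _)
  smul_mem' c x hx t := by rw [smul_smul]; exact hx _

theorem isClosed_lieAlgebraOfClosed [NormOneClass A] {K : Submonoid A}
    (hK : IsClosed (K : Set A)) : IsClosed (lieAlgebraOfClosed K hK : Set A) := by
  let _ : NormedAlgebra ℚ A := .restrictScalars ℚ ℝ A
  change IsClosed {x : A | ∀ t : ℝ, exp (t • x) ∈ K}
  simp only [Set.ofPred_forall]
  exact isClosed_iInter fun t => hK.preimage (exp_continuous.comp (continuous_const_smul t))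

end ExponentialFormula

section SpecialUnitaryLoops

variable {X : Type*} [TopologicalSpace X] {n : Type*} [Fintype n] [DecidableEq n]

/-- The monoid of maps `X → SU(n)` all of whose matrix entries belong to `A`, regarded as a
submonoid of the ambient algebra of matrix-valued functions. -/
def specialUnitaryLoops (A : StarSubalgebra ℂ C(X, ℂ)) (n : Type*) [Fintype n] [DecidableEq n] :
    Submonoid C(X, Matrix n n ℂ) where
  carrier := {f | (∀ x, f x ∈ Matrix.specialUnitaryGroup n ℂ) ∧
    ∀ i j, ∃ p ∈ A, ∀ x, f x i j = p x}
  one_mem' := by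
    refine ⟨fun _ => one_mem _, fun i j => ?_⟩
    by_cases hij : i = j
    · exact ⟨1, one_mem A, by simp [hij]⟩
    · exact ⟨0, zero_mem A, by simp [hij]⟩
  mul_mem' := by
    rintro f g ⟨hf, hfA⟩ ⟨hg, hgA⟩
    refine ⟨fun x => mul_mem (hf x) (hg x), fun i j => ?_⟩
    choose p hpA hp using fun k => hfA i k
    choose q hqA hq using fun k => hgA k j
    exact ⟨∑ k, p k * q k, sum_mem fun k _ => mul_mem (hpA k) (hqA k),
      fun x => by simp [Matrix.mul_apply, hp, hq]⟩

/-- The real-linear embedding of the quaternions `ℂ ⊕ ℂ` into the `2 × 2` complex matrices. -/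
noncomputable def firstRowMatrix : ℂ × ℂ →L[ℝ] Matrix (Fin 2) (Fin 2) ℂ :=
  LinearMap.toContinuousLinearMap
    { toFun p := !![p.1, p.2; -conj p.2, conj p.1]
      map_add' p q := by simp [add_comm]
      map_smul' c p := by simp [Matrix.smul_of] }

theorem firstRowMatrix_apply (a b : ℂ) :
    firstRowMatrix (a, b) = !![a, b; -conj b, conj a] := rfl

theorem firstRowMatrix_mul (a b c d : ℂ) :
    firstRowMatrix (a, b) * firstRowMatrix (c, d) =
      firstRowMatrix (a * c - b * conj d, a * d + b * conj c) := by
  simp only [firstRowMatrix_apply, Matrix.mul_fin_two]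
  ext i j
  fin_cases i <;> fin_cases j <;> simp <;> ring

theorem det_firstRowMatrix (a b : ℂ) :
    (firstRowMatrix (a, b)).det = ((‖a‖ ^ 2 + ‖b‖ ^ 2 : ℝ) : ℂ) := by
  rw [firstRowMatrix_apply, Matrix.det_fin_two_of, mul_neg, sub_neg_eq_add, Complex.mul_conj',
    Complex.mul_conj']
  norm_cast

theorem star_firstRowMatrix (a b : ℂ) :
    star (firstRowMatrix (a, b)) = (firstRowMatrix (a, b)).adjugate := by
  rw [firstRowMatrix_apply, Matrix.adjugate_fin_two_of]
  ext i j
  fin_cases i <;> fin_cases j <;> simp [Matrix.star_apply]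

theorem firstRowMatrix_mem_specialUnitaryGroup_iff {a b : ℂ} :
    firstRowMatrix (a, b) ∈ Matrix.specialUnitaryGroup (Fin 2) ℂ ↔ ‖a‖ ^ 2 + ‖b‖ ^ 2 = 1 := by
  rw [Matrix.mem_specialUnitaryGroup_iff, Matrix.mem_unitaryGroup_iff, star_firstRowMatrix,
    Matrix.mul_adjugate, det_firstRowMatrix]
  exact ⟨fun h => by exact_mod_cast h.2, fun h => by simp [h]⟩

theorem star_eq_adjugate_of_mem_specialUnitaryGroup {R : Type*} [CommRing R] [StarRing R]
    {M : Matrix n n R} (hM : M ∈ Matrix.specialUnitaryGroup n R) : star M = M.adjugate := by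
  obtain ⟨hunitary, hdet⟩ := Matrix.mem_specialUnitaryGroup_iff.1 hM
  refine (left_inv_eq_right_inv (a := M) ?_ (Matrix.mem_unitaryGroup_iff.1 hunitary)).symm
  rw [Matrix.adjugate_mul, hdet, one_smul]

theorem firstRowMatrix_of_mem_specialUnitaryGroup {M : Matrix (Fin 2) (Fin 2) ℂ}
    (hM : M ∈ Matrix.specialUnitaryGroup (Fin 2) ℂ) : firstRowMatrix (M 0 0, M 0 1) = M := by
  have hadj (i j : Fin 2) : conj (M j i) = M.adjugate i j :=
    congrFun₂ (star_eq_adjugate_of_mem_specialUnitaryGroup hM) i j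
  rw [Matrix.adjugate_fin_two] at hadj
  rw [firstRowMatrix_apply, hadj 0 0, hadj 1 0]
  ext i j
  fin_cases i <;> fin_cases j <;> simp

/-- The quaternion-valued function with first row `(a, b)`. Maps into `SU(2)` are exactly those
with `|a|² + |b|² = 1`. -/
noncomputable def ofFirstRow : C(X, ℂ) × C(X, ℂ) →L[ℝ] C(X, Matrix (Fin 2) (Fin 2) ℂ) :=
  ((firstRowMatrix ∘L .inl ℝ ℂ ℂ).compLeftContinuous ℝ X).coprod
    ((firstRowMatrix ∘L .inr ℝ ℂ ℂ).compLeftContinuous ℝ X)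

theorem ofFirstRow_apply (a b : C(X, ℂ)) (x : X) :
    ofFirstRow (a, b) x = firstRowMatrix (a x, b x) := by
  change firstRowMatrix (a x, 0) + firstRowMatrix (0, b x) = firstRowMatrix (a x, b x)
  rw [← map_add, Prod.mk_add_mk, add_zero, zero_add]

theorem ofFirstRow_mem_specialUnitaryLoops {A : StarSubalgebra ℂ C(X, ℂ)} {a b : C(X, ℂ)}
    (ha : a ∈ A) (hb : b ∈ A) (hab : ∀ x, ‖a x‖ ^ 2 + ‖b x‖ ^ 2 = 1) :
    ofFirstRow (a, b) ∈ specialUnitaryLoops A (Fin 2) := by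
  refine ⟨fun x => ?_, fun i j => ?_⟩
  · rw [ofFirstRow_apply]
    exact firstRowMatrix_mem_specialUnitaryGroup_iff.2 (hab x)
  · fin_cases i <;> fin_cases j
    · exact ⟨a, ha, fun x => by simp [ofFirstRow_apply, firstRowMatrix_apply]⟩
    · exact ⟨b, hb, fun x => by simp [ofFirstRow_apply, firstRowMatrix_apply]⟩
    · exact ⟨-star b, neg_mem (star_mem hb),
        fun x => by simp [ofFirstRow_apply, firstRowMatrix_apply]⟩
    · exact ⟨star a, star_mem ha, fun x => by simp [ofFirstRow_apply, firstRowMatrix_apply]⟩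

theorem ofFirstRow_mul (a b c d : C(X, ℂ)) :
    ofFirstRow (a, b) * ofFirstRow (c, d) =
      ofFirstRow (a * c - b * star d, a * d + b * star c) := by
  ext1 x
  simp [ofFirstRow_apply, firstRowMatrix_mul]

theorem exists_unimodular_mul_norm {a : C(X, ℂ)} (ha : IsUnit a) :
    ∃ u : C(X, ℂ), (∀ x, ‖u x‖ = 1) ∧ ∀ x, u x * ‖a x‖ = a x := by
  have hnorm (x : X) : (‖a x‖ : ℂ) ≠ 0 := by
    simpa using (ContinuousMap.isUnit_iff_forall_ne_zero a).1 ha x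
  exact ⟨⟨fun x => a x / ‖a x‖, by fun_prop (disch := exact hnorm)⟩,
    fun x => by simpa using div_self (hnorm x), fun x => div_mul_cancel₀ _ (hnorm x)⟩

/-- The function `x ↦ √(‖a x‖² + ‖b x‖²)` of a pair `(a, b)`, with values regarded as complex
numbers so that it lies in the algebra containing `a` and `b`. -/
noncomputable def pairNorm (p : C(X, ℂ) × C(X, ℂ)) : C(X, ℂ) :=
  (⟨fun z => (Real.sqrt z.re : ℂ), by fun_prop⟩ : C(ℂ, ℂ)).comp (p.1 * star p.1 + p.2 * star p.2)

theorem pairNorm_apply (p : C(X, ℂ) × C(X, ℂ)) (x : X) :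
    pairNorm p x = Real.sqrt (‖p.1 x‖ ^ 2 + ‖p.2 x‖ ^ 2) := by
  simp [pairNorm, Complex.mul_conj', ← Complex.ofReal_pow]

theorem norm_pairNorm_sq (p : C(X, ℂ) × C(X, ℂ)) (x : X) :
    ‖pairNorm p x‖ ^ 2 = ‖p.1 x‖ ^ 2 + ‖p.2 x‖ ^ 2 := by
  rw [pairNorm_apply, Complex.norm_real, Real.norm_eq_abs, sq_abs, Real.sq_sqrt (by positivity)]

theorem continuous_pairNorm [CompactSpace X] :
    Continuous (pairNorm : C(X, ℂ) × C(X, ℂ) → C(X, ℂ)) :=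
  (ContinuousMap.continuous_postcomp _).comp (by fun_prop)

theorem isUnit_pairNorm {p : C(X, ℂ) × C(X, ℂ)} (hp : IsUnit p.1) : IsUnit (pairNorm p) := by
  rw [ContinuousMap.isUnit_iff_forall_ne_zero] at hp ⊢
  intro x
  have hx : 0 < ‖p.1 x‖ := norm_pos_iff.2 (hp x)
  rw [← norm_ne_zero_iff, ← pow_ne_zero_iff two_ne_zero, norm_pairNorm_sq]
  positivity

end SpecialUnitaryLoops

section Generation

open scoped Matrix.Norms.L2Operator

variable {X : Type*} [TopologicalSpace X] [CompactSpace X]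

theorem exp_firstRowMatrix {c : ℂ} (hc : ‖c‖ = 1) (φ : ℝ) :
    exp (firstRowMatrix (0, φ * c)) = firstRowMatrix (Real.cos φ, Real.sin φ * c) := by
  have hsq : firstRowMatrix (0, c) * firstRowMatrix (0, c) = -1 := by
    rw [firstRowMatrix_mul, Complex.mul_conj', hc]
    simp [firstRowMatrix_apply, Matrix.one_fin_two]
  have hone : firstRowMatrix (1, 0) = 1 := by simp [firstRowMatrix_apply, Matrix.one_fin_two]
  have hexp := exp_smul_of_mul_self_eq_neg_one hsq φ
  rw [← hone, ← map_smul, ← map_smul, ← map_smul, ← map_add] at hexp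
  simpa using hexp

theorem exp_ofFirstRow {a b w : C(X, ℂ)} {c : X → ℂ} {φ : X → ℝ} (hc : ∀ x, ‖c x‖ = 1)
    (hw : ∀ x, w x = φ x * c x) (ha : ∀ x, a x = Real.cos (φ x))
    (hb : ∀ x, b x = Real.sin (φ x) * c x) : exp (ofFirstRow (0, w)) = ofFirstRow (a, b) := by
  ext1 x
  rw [exp_continuousMap_apply, ofFirstRow_apply, ofFirstRow_apply, ContinuousMap.zero_apply, hw,
    ha, hb, exp_firstRowMatrix (hc x)]

theorem exp_ofFirstRow_mem_topologicalClosure [Nonempty X] {A : StarSubalgebra ℂ C(X, ℂ)}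
    (hA : Dense (Submodule.span ℝ {u : C(X, ℂ) | u ∈ A ∧ ∀ x, ‖u x‖ = 1} : Set C(X, ℂ)))
    (w : C(X, ℂ)) :
    exp (ofFirstRow (0, w)) ∈ (specialUnitaryLoops A (Fin 2)).topologicalClosure := by
  set K := (specialUnitaryLoops A (Fin 2)).topologicalClosure
  have hK : IsClosed (K : Set C(X, Matrix (Fin 2) (Fin 2) ℂ)) :=
    Submonoid.isClosed_topologicalClosure _
  let ι : C(X, ℂ) →L[ℝ] C(X, Matrix (Fin 2) (Fin 2) ℂ) := ofFirstRow ∘L .inr ℝ _ _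
  let L : Submodule ℝ C(X, ℂ) := (lieAlgebraOfClosed K hK).comap ι.toLinearMap
  have hL : IsClosed (L : Set C(X, ℂ)) := (isClosed_lieAlgebraOfClosed hK).preimage ι.continuous
  have hgen : Submodule.span ℝ {u : C(X, ℂ) | u ∈ A ∧ ∀ x, ‖u x‖ = 1} ≤ L := by
    rw [Submodule.span_le]
    rintro u ⟨huA, hu⟩ t
    have hexp : exp (t • ι u) =
        ofFirstRow (algebraMap ℝ C(X, ℂ) (Real.cos t), algebraMap ℝ C(X, ℂ) (Real.sin t) * u) := by
      rw [← map_smul]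
      exact exp_ofFirstRow (φ := fun _ => t) hu (fun x => by simp) (fun x => rfl) (fun x => rfl)
    change exp (t • ι u) ∈ K
    rw [hexp]
    refine Submonoid.le_topologicalClosure _ (ofFirstRow_mem_specialUnitaryLoops
      (A.algebraMap_mem' _) (mul_mem (A.algebraMap_mem' _) huA) fun x => ?_)
    simp [-Complex.ofReal_cos, -Complex.ofReal_sin, hu x]
  have hw : w ∈ L := hL.closure_subset_iff.2 hgen (hA w)
  simpa [ι] using hw 1

theorem ofFirstRow_mem_of_isUnit {K : Submonoid C(X, Matrix (Fin 2) (Fin 2) ℂ)}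
    (hK : ∀ w, exp (ofFirstRow (0, w)) ∈ K) {a b : C(X, ℂ)} (ha : IsUnit a) (hb : IsUnit b)
    (hab : ∀ x, ‖a x‖ ^ 2 + ‖b x‖ ^ 2 = 1) : ofFirstRow (a, b) ∈ K := by
  have hunimodular {u : C(X, ℂ)} (hu : ∀ x, ‖u x‖ = 1) : ofFirstRow (0, u) ∈ K := by
    rw [← exp_ofFirstRow (φ := fun _ => Real.pi / 2) (w := algebraMap ℝ C(X, ℂ) (Real.pi / 2) * u)
      hu (fun x => rfl) (by simp) (by simp)]
    exact hK _
  obtain ⟨u, hu, hua⟩ := exists_unimodular_mul_norm ha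
  obtain ⟨v, hv, hvb⟩ := exists_unimodular_mul_norm hb
  have hcos (x : X) : Real.cos (Real.arccos ‖b x‖) = ‖b x‖ :=
    Real.cos_arccos (by linarith [norm_nonneg (b x)]) (by nlinarith [hab x, sq_nonneg ‖a x‖])
  have hsin (x : X) : Real.sin (Real.arccos ‖b x‖) = ‖a x‖ := by
    rw [Real.sin_arccos, ← hab x, add_sub_cancel_right, Real.sqrt_sq (norm_nonneg _)]
  -- With `θ = arccos ‖b‖` we have `(a, b) = (u sin θ, v cos θ)`, the left translate by `(0, v)`
  -- of the point at time `θ` on the one-parameter group generated by `(0, c)`.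
  let p : C(X, ℂ) := ⟨fun x => ‖a x‖, by fun_prop⟩
  let q : C(X, ℂ) := ⟨fun x => ‖b x‖, by fun_prop⟩
  let c : C(X, ℂ) := -(star u * v)
  let w : C(X, ℂ) := ⟨fun x => Real.arccos ‖b x‖ * c x, by fun_prop⟩
  have hexp : exp (ofFirstRow (0, w)) = ofFirstRow (q, p * c) :=
    exp_ofFirstRow (fun x => by simp [c, hu, hv]) (fun x => rfl) (fun x => by rw [hcos]; rfl)
      (fun x => by rw [hsin]; rfl)
  have hfactor : ofFirstRow (a, b) = ofFirstRow (0, v) * exp (ofFirstRow (0, w)) := by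
    rw [hexp, ofFirstRow_mul]
    congr 2 <;> ext x
    · have hv_star : v x * conj (v x) = 1 := by simp [Complex.mul_conj', hv]
      simp only [c, p, ContinuousMap.sub_apply, ContinuousMap.mul_apply, ContinuousMap.star_apply,
        ContinuousMap.neg_apply, ContinuousMap.zero_apply, ContinuousMap.coe_mk, RCLike.star_def,
        map_mul, map_neg, Complex.conj_conj, Complex.conj_ofReal]
      linear_combination -(hua x) - (u x * ‖a x‖) * hv_star
    · simpa [q] using (hvb x).symm
  rw [hfactor]
  exact mul_mem (hunimodular hv) (hK w)

theorem mem_closure_isUnit_of_norm_sq_add_norm_sq (hX : Dense {f : C(X, ℂ) | IsUnit f})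
    {a b : C(X, ℂ)} (hab : ∀ x, ‖a x‖ ^ 2 + ‖b x‖ ^ 2 = 1) :
    (a, b) ∈ closure {p : C(X, ℂ) × C(X, ℂ) |
      IsUnit p.1 ∧ IsUnit p.2 ∧ ∀ x, ‖p.1 x‖ ^ 2 + ‖p.2 x‖ ^ 2 = 1} := by
  have hone : pairNorm (a, b) = 1 := by
    ext x
    simp [pairNorm_apply, hab x]
  have hinv : ContinuousAt (fun p => Ring.inverse (pairNorm p)) (a, b) :=
    ContinuousAt.comp (g := Ring.inverse)
      (by rw [hone]; exact NormedRing.inverse_continuousAt 1) continuous_pairNorm.continuousAt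
  let ν (p : C(X, ℂ) × C(X, ℂ)) :=
    (Ring.inverse (pairNorm p) * p.1, Ring.inverse (pairNorm p) * p.2)
  have hν : ContinuousAt ν (a, b) :=
    (hinv.mul continuousAt_fst).prodMk (hinv.mul continuousAt_snd)
  have hν_fixed : ν (a, b) = (a, b) := by simp [ν, hone]
  rw [← hν_fixed]
  refine closure_mono ?_ (hν.continuousWithinAt.mem_closure_image ((hX.prod hX) (a, b)))
  rintro _ ⟨p, ⟨hp₁, hp₂⟩, rfl⟩
  have hp : IsUnit (pairNorm p) := isUnit_pairNorm hp₁
  refine ⟨hp.ringInverse.mul hp₁, hp.ringInverse.mul hp₂, fun x => ?_⟩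
  have hcancel : Ring.inverse (pairNorm p) x * pairNorm p x = 1 :=
    DFunLike.congr_fun (Ring.inverse_mul_cancel _ hp) x
  rw [ContinuousMap.mul_apply, ContinuousMap.mul_apply, norm_mul, norm_mul, mul_pow, mul_pow,
    ← mul_add, ← norm_pairNorm_sq, ← mul_pow, ← norm_mul, hcancel, norm_one, one_pow]

theorem mem_topologicalClosure_specialUnitaryLoops {A : StarSubalgebra ℂ C(X, ℂ)}
    (hA : Dense (Submodule.span ℝ {u : C(X, ℂ) | u ∈ A ∧ ∀ x, ‖u x‖ = 1} : Set C(X, ℂ)))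
    (hX : Dense {f : C(X, ℂ) | IsUnit f}) {f : C(X, Matrix (Fin 2) (Fin 2) ℂ)}
    (hf : ∀ x, f x ∈ Matrix.specialUnitaryGroup (Fin 2) ℂ) :
    f ∈ (specialUnitaryLoops A (Fin 2)).topologicalClosure := by
  obtain hempty | hnonempty := isEmpty_or_nonempty X
  · rw [Subsingleton.elim f 1]
    exact one_mem _
  let a : C(X, ℂ) := ⟨fun x => f x 0 0, by fun_prop⟩
  let b : C(X, ℂ) := ⟨fun x => f x 0 1, by fun_prop⟩
  have hfab : ofFirstRow (a, b) = f := by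
    ext1 x
    rw [ofFirstRow_apply]
    exact firstRowMatrix_of_mem_specialUnitaryGroup (hf x)
  have hab (x : X) : ‖a x‖ ^ 2 + ‖b x‖ ^ 2 = 1 := by
    rw [← firstRowMatrix_mem_specialUnitaryGroup_iff, ← ofFirstRow_apply, hfab]
    exact hf x
  rw [← hfab, ← SetLike.mem_coe, ← (Submonoid.isClosed_topologicalClosure _).closure_eq]
  exact map_mem_closure ofFirstRow.continuous (mem_closure_isUnit_of_norm_sq_add_norm_sq hX hab)
    fun p ⟨hp₁, hp₂, hp⟩ =>
      ofFirstRow_mem_of_isUnit (exp_ofFirstRow_mem_topologicalClosure hA) hp₁ hp₂ hp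

end Generation

theorem polynomial_loops_dense_in_loopGroup_SU2_general {X : Type*} [TopologicalSpace X]
    [CompactSpace X] {A : StarSubalgebra ℂ C(X, ℂ)}
    (hA : Dense (Submodule.span ℝ {u : C(X, ℂ) | u ∈ A ∧ ∀ x, ‖u x‖ = 1} : Set C(X, ℂ)))
    (hX : Dense {f : C(X, ℂ) | IsUnit f}) :
    Dense {f : C(X, Matrix.specialUnitaryGroup (Fin 2) ℂ) |
      ∀ i j, ∃ p ∈ A, ∀ x, (f x : Matrix (Fin 2) (Fin 2) ℂ) i j = p x} := by
  intro f
  let val : C(Matrix.specialUnitaryGroup (Fin 2) ℂ, Matrix (Fin 2) (Fin 2) ℂ) :=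
    ⟨Subtype.val, continuous_subtype_val⟩
  have hval : IsInducing (val.comp : C(X, _) → C(X, _)) :=
    ContinuousMap.isInducing_postcomp val .subtypeVal
  rw [hval.closure_eq_preimage_closure_image, Set.mem_preimage]
  refine closure_mono ?_ (mem_topologicalClosure_specialUnitaryLoops hA hX fun x => (f x).2)
  rintro g ⟨hg, hgA⟩
  exact ⟨⟨fun x => ⟨g x, hg x⟩, by fun_prop⟩, hgA, rfl⟩

section LaurentPolynomials

/-- The function `z ↦ zⁿ` on the unit circle. -/
noncomputable def laurentMonomial (n : ℤ) : C(Circle, ℂ) :=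
  ⟨fun z => ((z ^ n : Circle) : ℂ), continuous_subtype_val.comp (continuous_zpow n)⟩

theorem laurentMonomial_apply (n : ℤ) (z : Circle) : laurentMonomial n z = (z : ℂ) ^ n :=
  Circle.coe_zpow z n

theorem norm_laurentMonomial_apply (n : ℤ) (z : Circle) : ‖laurentMonomial n z‖ = 1 :=
  Circle.norm_coe _

theorem laurentMonomial_zero : laurentMonomial 0 = 1 := by
  ext z
  simp [laurentMonomial_apply]

theorem laurentMonomial_mul (m n : ℤ) :
    laurentMonomial m * laurentMonomial n = laurentMonomial (m + n) := by
  ext z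
  simp [laurentMonomial_apply, zpow_add₀]

theorem star_laurentMonomial (n : ℤ) : star (laurentMonomial n) = laurentMonomial (-n) := by
  ext z
  simp [laurentMonomial_apply, ← Circle.coe_inv_eq_conj]

theorem mul_mem_span_laurentMonomial {p q : C(Circle, ℂ)}
    (hp : p ∈ Submodule.span ℂ (Set.range laurentMonomial))
    (hq : q ∈ Submodule.span ℂ (Set.range laurentMonomial)) :
    p * q ∈ Submodule.span ℂ (Set.range laurentMonomial) := by
  have hpq := Submodule.mul_mem_mul hp hq
  rw [Submodule.span_mul_span] at hpq
  refine Submodule.span_mono ?_ hpq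
  rintro _ ⟨_, ⟨m, rfl⟩, _, ⟨n, rfl⟩, rfl⟩
  exact ⟨m + n, (laurentMonomial_mul m n).symm⟩

theorem star_mem_span_laurentMonomial {p : C(Circle, ℂ)}
    (hp : p ∈ Submodule.span ℂ (Set.range laurentMonomial)) :
    star p ∈ Submodule.span ℂ (Set.range laurentMonomial) := by
  induction hp using Submodule.span_induction with
  | mem p hp =>
    obtain ⟨n, rfl⟩ := hp
    exact Submodule.subset_span ⟨-n, (star_laurentMonomial n).symm⟩
  | zero => rw [star_zero]; exact zero_mem _
  | add p q _ _ hp hq => rw [star_add]; exact add_mem hp hq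
  | smul c p _ hp => rw [star_smul]; exact Submodule.smul_mem _ _ hp

/-- The restrictions of Laurent polynomials to the unit circle. -/
noncomputable def laurentPolynomials : StarSubalgebra ℂ C(Circle, ℂ) where
  __ := (Submodule.span ℂ (Set.range laurentMonomial)).toSubalgebra
    (Submodule.subset_span ⟨0, laurentMonomial_zero⟩) fun _ _ => mul_mem_span_laurentMonomial
  star_mem' := star_mem_span_laurentMonomial

theorem mem_laurentPolynomials_iff {p : C(Circle, ℂ)} :
    p ∈ laurentPolynomials ↔
      ∃ a : ℤ →₀ ℂ, ∀ z : Circle, p z = a.sum fun k c => c * (z : ℂ) ^ k := by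
  change p ∈ Submodule.span ℂ (Set.range laurentMonomial) ↔ _
  rw [Finsupp.mem_span_range_iff_exists_finsupp]
  simp [ContinuousMap.ext_iff, Finsupp.sum, laurentMonomial_apply, eq_comm]

theorem laurentMonomial_mem (n : ℤ) : laurentMonomial n ∈ laurentPolynomials :=
  Submodule.subset_span (Set.mem_range_self n)

theorem dense_laurentPolynomials : Dense (laurentPolynomials : Set C(Circle, ℂ)) := by
  have hsep : laurentPolynomials.SeparatesPoints := fun x y hxy =>
    ⟨_, ⟨laurentMonomial 1, laurentMonomial_mem 1, rfl⟩,
      by simpa [laurentMonomial_apply, Circle.coe_inj] using hxy⟩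
  rw [dense_iff_closure_eq, ← StarSubalgebra.topologicalClosure_coe,
    ContinuousMap.starSubalgebra_topologicalClosure_eq_top_of_separatesPoints _ hsep,
    StarSubalgebra.coe_top]

theorem dense_span_unimodular_laurentPolynomials :
    Dense (Submodule.span ℝ {u : C(Circle, ℂ) | u ∈ laurentPolynomials ∧ ∀ z, ‖u z‖ = 1} :
      Set C(Circle, ℂ)) := by
  refine dense_laurentPolynomials.mono fun p hp => ?_
  obtain ⟨a, rfl⟩ := (Finsupp.mem_span_range_iff_exists_finsupp).1 hp
  refine sum_mem fun n _ => ?_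
  have hpolar : a n • laurentMonomial n =
      ‖a n‖ • (Complex.exp ((a n).arg * Complex.I) • laurentMonomial n) := by
    rw [← Complex.coe_smul, smul_smul, Complex.norm_mul_exp_arg_mul_I]
  simp only [hpolar]
  refine Submodule.smul_mem _ _ (Submodule.subset_span
    ⟨Subalgebra.smul_mem _ (laurentMonomial_mem n) _, fun z => ?_⟩)
  simp [norm_laurentMonomial_apply, Complex.norm_exp_ofReal_mul_I]

theorem contDiff_comp_circleExp {r : WithTop ℕ∞} {p : C(Circle, ℂ)}
    (hp : p ∈ laurentPolynomials) : ContDiff ℝ r fun θ : ℝ => p (Circle.exp θ) := by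
  obtain ⟨a, ha⟩ := mem_laurentPolynomials_iff.1 hp
  simp only [ha, Finsupp.sum, Circle.coe_exp, ← Complex.exp_int_mul]
  have hcoe : ContDiff ℝ r ((↑) : ℝ → ℂ) := Complex.ofRealCLM.contDiff
  fun_prop

theorem dense_compl_range_of_mem_laurentPolynomials {p : C(Circle, ℂ)}
    (hp : p ∈ laurentPolynomials) : Dense (Set.range p)ᶜ := by
  have hrange : Set.range p = Set.range fun θ : ℝ => p (Circle.exp θ) :=
    (Circle.exp_surjective.range_comp p).symm
  rw [hrange]
  exact (contDiff_comp_circleExp hp).dense_compl_range_of_finrank_lt_finrank (by simp)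

/-- A Laurent polynomial traces a `C¹` curve in the plane, so it misses arbitrarily small values;
subtracting such a value makes it nowhere zero. -/
theorem dense_isUnit_circle : Dense {f : C(Circle, ℂ) | IsUnit f} := by
  refine dense_closure.1 (dense_laurentPolynomials.mono fun p hp => ?_)
  have hcont : Continuous fun c : ℂ => p - ContinuousMap.const Circle c := by fun_prop
  have hp_closure := map_mem_closure hcont (dense_compl_range_of_mem_laurentPolynomials hp 0)
    (t := {f : C(Circle, ℂ) | IsUnit f}) fun c hc => by
      rw [Set.mem_ofPred_eq, ContinuousMap.isUnit_iff_forall_ne_zero]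
      exact fun z hz => hc ⟨z, sub_eq_zero.1 hz⟩
  simpa using hp_closure

end LaurentPolynomials

/-- Polynomial loops are dense in the continuous loop group of `SU(2)`: the continuous maps
`S¹ → SU(2)` all of whose matrix entries are restrictions to the circle of Laurent
polynomials form a dense subset of `C(S¹, SU(2))` with the compact-open topology
(= uniform convergence). -/
theorem polynomial_loops_dense_in_loopGroup_SU2 :
    Dense {f : C(Circle, Matrix.specialUnitaryGroup (Fin 2) ℂ) |
        ∀ i j : Fin 2, ∃ a : ℤ →₀ ℂ,
          ∀ z : Circle, ((f z : Matrix (Fin 2) (Fin 2) ℂ) i j) = a.sum fun k c => c * (z : ℂ) ^ k} := by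
  refine (polynomial_loops_dense_in_loopGroup_SU2_general dense_span_unimodular_laurentPolynomials
    dense_isUnit_circle).mono fun f hf i j => ?_
  obtain ⟨p, hp, hfp⟩ := hf i j
  simpa only [hfp] using mem_laurentPolynomials_iff.1 hp
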